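/- Under the setup of the deterministic ComFedL convergence theorem — n devices with composition objectives Fⁱ = gⁱ∘fⁱ where the fⁱ have Jacobians bounded by G_f and L_f-Lipschitz, the gⁱ have gradients bounded by G_g and L_g-Lipschitz, F = (1/n) Σᵢ Fⁱ has L-Lipschitz gradient and is bounded below by F*, and the iterates are wⁱ_{s,0} = w̄ₛ, wⁱ_{s,t+1} = wⁱ_{s,t} − η ∇Fⁱ(wⁱ_{s,t}) for t < τ, w̄_{s+1} = (1/n) Σᵢ wⁱ_{s,τ} — set T = S τ and choose the step size η = 1/√T. Then (1/S) Σ_{s=0}^{S−1} ‖∇F(w̄ₛ)‖² ≤ [ (F(w̄₀) − F*) + τ G_f² G_g² (G_g L_f + G_f² L_g) + L τ G_f² G_g² + (L/2) G_f² G_g² ] / √T; in particular the average squared gradient norm is O(1/√T). -/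

import Mathlib

/-!
Write `G = Gf * Gg` and `K = Gg * Lf + Gf ^ 2 * Lg`. By the chain rule every local objective
`g i ∘ f i` has gradient bounded by `G` (`norm_gradient_comp_le`) and `K`-Lipschitz
(`gradient_comp_lipschitz`). Hence after `t` local steps a device has drifted by at most
`t * η * G` from the last average, and the total averaged direction `v` of a round, defined by
`wbar (s + 1) = wbar s - η • v`, satisfies `‖v‖ ≤ τ * G` and
`‖v - τ • ∇F (wbar s)‖ ≤ K * η * G * τ ^ 2`.

The quadratic upper bound for `F` (`descent_lemma`) along `-η • v` then gives the one-round
inequality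
`η * τ * ‖∇F (wbar s)‖ ^ 2 ≤ F (wbar s) - F (wbar (s + 1)) + η ^ 2 * τ ^ 2 * G ^ 2 * (K + L / 2)`
(`one_round`). It telescopes over `s < S`; since `η * τ * S = √T` and `η * √T = 1`, this is the
claimed rate, with room to spare in the terms involving `L`.
-/

open Real BigOperators InnerProductSpace

/-- Local iterates as an accumulated sum of gradients. -/
lemma local_iterate_eq {E : Type*} [AddCommGroup E] [Module ℝ E] {η : ℝ} {τ : ℕ}
    {u : ℕ → E} {G' : E → E}
    (hstep : ∀ t, t < τ → u (t + 1) = u t - η • G' (u t)) :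
    ∀ t ≤ τ, u t = u 0 - η • ∑ k ∈ Finset.range t, G' (u k) := by
  intro t
  induction t with
  | zero => simp
  | succ t ih =>
    intro ht
    rw [hstep t ht, Finset.sum_range_succ, smul_add, ← sub_sub, ← ih (by omega)]

section Helpers

variable {E H : Type*} [NormedAddCommGroup E] [InnerProductSpace ℝ E] [CompleteSpace E]
  [NormedAddCommGroup H] [InnerProductSpace ℝ H] [CompleteSpace H]

lemma norm_gradient_eq_norm_fderiv (h : E → ℝ) (x : E) : ‖gradient h x‖ = ‖fderiv ℝ h x‖ := by
  simp [gradient]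

lemma norm_gradient_sub_eq_norm_fderiv_sub (h : E → ℝ) (x y : E) :
    ‖gradient h x - gradient h y‖ = ‖fderiv ℝ h x - fderiv ℝ h y‖ := by
  simp only [gradient]
  rw [← map_sub, LinearIsometryEquiv.norm_map]

lemma norm_gradient_comp_le {f : E → H} {g : H → ℝ} {Gf Gg : ℝ} (hGg : 0 ≤ Gg)
    (hf : Differentiable ℝ f) (hg : Differentiable ℝ g)
    (hfb : ∀ w, ‖fderiv ℝ f w‖ ≤ Gf) (hgb : ∀ y, ‖gradient g y‖ ≤ Gg) (x : E) :
    ‖gradient (g ∘ f) x‖ ≤ Gf * Gg := by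
  rw [norm_gradient_eq_norm_fderiv, fderiv_comp x (hg _) (hf _)]
  have h1 := hgb (f x)
  rw [norm_gradient_eq_norm_fderiv] at h1
  calc _ ≤ ‖fderiv ℝ g (f x)‖ * ‖fderiv ℝ f x‖ := ContinuousLinearMap.opNorm_comp_le _ _
    _ ≤ Gg * Gf := by gcongr; exact hfb x
    _ = Gf * Gg := mul_comm _ _

lemma gradient_comp_lipschitz {f : E → H} {g : H → ℝ} {Gf Gg Lf Lg : ℝ} (hGf : 0 ≤ Gf)
    (hGg : 0 ≤ Gg) (hLg : 0 ≤ Lg)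
    (hf : Differentiable ℝ f) (hg : Differentiable ℝ g)
    (hfb : ∀ w, ‖fderiv ℝ f w‖ ≤ Gf) (hgb : ∀ y, ‖gradient g y‖ ≤ Gg)
    (hfl : ∀ w₁ w₂, ‖fderiv ℝ f w₁ - fderiv ℝ f w₂‖ ≤ Lf * ‖w₁ - w₂‖)
    (hgl : ∀ y₁ y₂, ‖gradient g y₁ - gradient g y₂‖ ≤ Lg * ‖y₁ - y₂‖) (x y : E) :
    ‖gradient (g ∘ f) x - gradient (g ∘ f) y‖ ≤ (Gg * Lf + Gf ^ 2 * Lg) * ‖x - y‖ := by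
  rw [norm_gradient_sub_eq_norm_fderiv_sub, fderiv_comp x (hg _) (hf _),
    fderiv_comp y (hg _) (hf _)]
  have h1 := hgb (f x)
  have h2 := hgl (f x) (f y)
  rw [norm_gradient_eq_norm_fderiv] at h1
  rw [norm_gradient_sub_eq_norm_fderiv_sub] at h2
  have h3 : ‖f x - f y‖ ≤ Gf * ‖x - y‖ :=
    convex_univ.norm_image_sub_le_of_norm_fderiv_le (fun z _ => hf z) (fun z _ => hfb z)
      (Set.mem_univ y) (Set.mem_univ x)
  have h4 : (fderiv ℝ g (f x)).comp (fderiv ℝ f x) - (fderiv ℝ g (f y)).comp (fderiv ℝ f y)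
      = (fderiv ℝ g (f x)).comp (fderiv ℝ f x - fderiv ℝ f y)
        + (fderiv ℝ g (f x) - fderiv ℝ g (f y)).comp (fderiv ℝ f y) := by
    ext z; simp
  rw [h4]
  calc _ ≤ ‖fderiv ℝ g (f x)‖ * ‖fderiv ℝ f x - fderiv ℝ f y‖
        + ‖fderiv ℝ g (f x) - fderiv ℝ g (f y)‖ * ‖fderiv ℝ f y‖ :=
        (norm_add_le _ _).trans (add_le_add (ContinuousLinearMap.opNorm_comp_le _ _)
          (ContinuousLinearMap.opNorm_comp_le _ _))
    _ ≤ Gg * (Lf * ‖x - y‖) + (Lg * (Gf * ‖x - y‖)) * Gf := by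
        gcongr
        · exact hfl x y
        · exact h2.trans (by gcongr)
        · exact hfb y
    _ = _ := by ring

/-- The quadratic upper bound for a function with `L`-Lipschitz gradient: the function
`t ↦ F (x + t v) - t ⟪∇F x, v⟫ - (L / 2) t² ‖v‖²` is nonincreasing on `[0, 1]`. -/
lemma descent_lemma {F : E → ℝ} {L : ℝ} (hF : Differentiable ℝ F)
    (hFl : ∀ x y, ‖gradient F x - gradient F y‖ ≤ L * ‖x - y‖) (x v : E) :
    F (x + v) ≤ F x + ⟪gradient F x, v⟫_ℝ + L / 2 * ‖v‖ ^ 2 := by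
  let φ : ℝ → ℝ := fun t => F (x + t • v) - t * ⟪gradient F x, v⟫_ℝ - L / 2 * ‖v‖ ^ 2 * t ^ 2
  have hd : ∀ t, HasDerivAt φ (⟪gradient F (x + t • v), v⟫_ℝ - ⟪gradient F x, v⟫_ℝ
      - L * ‖v‖ ^ 2 * t) t := by
    intro t
    have h1 : HasDerivAt (fun t : ℝ => x + t • v) v t := by
      simpa using ((hasDerivAt_id t).smul_const v).const_add x
    have h2 := (hF (x + t • v)).hasGradientAt.hasFDerivAt.comp_hasDerivAt t h1
    have h3 := (h2.sub ((hasDerivAt_id t).mul_const ⟪gradient F x, v⟫_ℝ)).sub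
      (((hasDerivAt_id t).pow 2).const_mul (L / 2 * ‖v‖ ^ 2))
    refine h3.congr_deriv ?_
    simp
    ring
  have hanti : AntitoneOn φ (Set.Icc 0 1) := by
    refine antitoneOn_of_deriv_nonpos (convex_Icc 0 1)
      (fun t _ => (hd t).continuousAt.continuousWithinAt)
      (fun t _ => (hd t).differentiableAt.differentiableWithinAt) fun t ht => ?_
    rw [interior_Icc] at ht
    rw [(hd t).deriv, ← inner_sub_left]
    have h1 := real_inner_le_norm (gradient F (x + t • v) - gradient F x) v
    have h2 := hFl (x + t • v) x
    rw [add_sub_cancel_left, norm_smul, Real.norm_of_nonneg ht.1.le] at h2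
    nlinarith [mul_le_mul_of_nonneg_right h2 (norm_nonneg v)]
  have h := hanti (Set.left_mem_Icc.2 zero_le_one) (Set.right_mem_Icc.2 zero_le_one) zero_le_one
  simp only [φ, one_smul, zero_smul, add_zero] at h
  linarith

/-- One communication round, for arbitrary local objectives `h i` with `G`-bounded,
`K`-Lipschitz gradients. -/
lemma one_round {n : ℕ} (hn : 1 ≤ n) {G K L η : ℝ} (hK : 0 ≤ K) (hL : 0 ≤ L)
    (hη : 0 ≤ η) {τ : ℕ} {h : Fin n → E → ℝ} (hd : ∀ i, Differentiable ℝ (h i))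
    (hb : ∀ i x, ‖gradient (h i) x‖ ≤ G)
    (hl : ∀ i x y, ‖gradient (h i) x - gradient (h i) y‖ ≤ K * ‖x - y‖)
    {F : E → ℝ} (hF : ∀ x, F x = (n : ℝ)⁻¹ * ∑ i, h i x)
    (hFl : ∀ x y, ‖gradient F x - gradient F y‖ ≤ L * ‖x - y‖)
    {x x' : E} {u : Fin n → ℕ → E} (hu0 : ∀ i, u i 0 = x)
    (hstep : ∀ i t, t < τ → u i (t + 1) = u i t - η • gradient (h i) (u i t))
    (hx' : x' = (n : ℝ)⁻¹ • ∑ i, u i τ) :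
    η * τ * ‖gradient F x‖ ^ 2 ≤ F x - F x' + η ^ 2 * τ ^ 2 * G ^ 2 * (K + L / 2) := by
  have hn0 : (n : ℝ) ≠ 0 := by positivity
  have hG : 0 ≤ G := (norm_nonneg _).trans (hb ⟨0, hn⟩ x)
  have havg : ∀ z : Fin n → E, ∀ C : ℝ, (∀ i, ‖z i‖ ≤ C) → ‖(n : ℝ)⁻¹ • ∑ i, z i‖ ≤ C := by
    intro z C hz
    rw [norm_smul, norm_inv, Real.norm_natCast, inv_mul_le_iff₀ (by positivity)]
    exact (norm_sum_le_of_le _ fun i _ => hz i).trans (by simp)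
  have hgrad : ∀ y, HasGradientAt F ((n : ℝ)⁻¹ • ∑ i, gradient (h i) y) y := by
    intro y
    have h1 : HasFDerivAt (fun y => ∑ i, h i y) (∑ i, toDual ℝ E (gradient (h i) y)) y :=
      HasFDerivAt.fun_sum fun i _ => (hd i y).hasGradientAt.hasFDerivAt
    rw [hasGradientAt_iff_hasFDerivAt, funext hF]
    refine (h1.const_mul ((n : ℝ)⁻¹)).congr_fderiv ?_
    simp
  have hFd : Differentiable ℝ F := fun y => (hgrad y).differentiableAt
  have hgb : ‖gradient F x‖ ≤ G := by
    rw [(hgrad x).gradient]; exact havg _ _ fun i => hb i x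
  have hit := fun i => local_iterate_eq (G' := gradient (h i)) (hstep i)
  have hsum : ∀ i t, ‖∑ k ∈ Finset.range t, gradient (h i) (u i k)‖ ≤ t * G := fun i t =>
    (norm_sum_le_of_le _ fun k _ => hb i _).trans (by simp)
  have hdrift : ∀ i, ∀ t < τ, ‖u i t - x‖ ≤ η * (τ * G) := by
    intro i t ht
    rw [hit i t ht.le, hu0, sub_sub_cancel_left, norm_neg, norm_smul, Real.norm_of_nonneg hη]
    have : (t : ℝ) ≤ τ := by exact_mod_cast ht.le
    exact mul_le_mul_of_nonneg_left ((hsum i t).trans (by gcongr)) hη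
  set v : E := (n : ℝ)⁻¹ • ∑ i, ∑ k ∈ Finset.range τ, gradient (h i) (u i k) with hv
  have hvb : ‖v‖ ≤ τ * G := havg _ _ fun i => hsum i τ
  have hxv : x' = x + (-η) • v := by
    rw [hx', Finset.sum_congr rfl fun i _ => by rw [hit i τ le_rfl, hu0 i],
      Finset.sum_sub_distrib, ← Finset.smul_sum, smul_sub, hv]
    simp only [Finset.sum_const, Finset.card_univ, Fintype.card_fin, ← Nat.cast_smul_eq_nsmul ℝ]
    rw [smul_smul, inv_mul_cancel₀ hn0, one_smul, neg_smul, sub_eq_add_neg]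
    rw [smul_comm η]
  have herr : ‖v - (τ : ℝ) • gradient F x‖ ≤ τ * (K * (η * (τ * G))) := by
    have : v - (τ : ℝ) • gradient F x = (n : ℝ)⁻¹ • ∑ i, ∑ k ∈ Finset.range τ,
        (gradient (h i) (u i k) - gradient (h i) x) := by
      rw [(hgrad x).gradient, hv, smul_comm, ← smul_sub]
      simp [Finset.sum_sub_distrib, Finset.smul_sum, Nat.cast_smul_eq_nsmul]
    rw [this]
    refine havg _ _ fun i => (norm_sum_le_of_le _ fun k hk => (hl i _ _).trans
      (mul_le_mul_of_nonneg_left (hdrift i k (Finset.mem_range.1 hk)) hK)).trans (by simp)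
  have hdesc := descent_lemma hFd hFl x ((-η) • v)
  rw [← hxv, inner_smul_right, norm_smul, norm_neg, Real.norm_of_nonneg hη] at hdesc
  have hin : ⟪gradient F x, v⟫_ℝ = τ * ‖gradient F x‖ ^ 2
      + ⟪gradient F x, v - (τ : ℝ) • gradient F x⟫_ℝ := by
    rw [inner_sub_right, inner_smul_right (gradient F x) (gradient F x), real_inner_self_eq_norm_sq]; ring
  have hcs : -⟪gradient F x, v - (τ : ℝ) • gradient F x⟫_ℝ ≤ G * (τ * (K * (η * (τ * G)))) :=
    ((neg_le_abs _).trans (abs_real_inner_le_norm _ _)).trans (by gcongr)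
  have hq : L / 2 * (η * ‖v‖) ^ 2 ≤ L / 2 * (η * (τ * G)) ^ 2 := by gcongr
  rw [hin] at hdesc
  linarith [mul_le_mul_of_nonneg_left hcs hη]

end Helpers

/-- O(1/√T) convergence-rate corollary of the deterministic ComFedL
convergence theorem, with `T = S τ` and step size `η = 1/√T`. -/
theorem comfedl_deterministic_rate (d p n : ℕ) (hn : 1 ≤ n)
    (Gf Gg Lf Lg L Fstar : ℝ)
    (hGf : 0 < Gf) (hGg : 0 < Gg) (hLf : 0 < Lf) (hLg : 0 < Lg) (hL : 0 < L)
    (τ S T : ℕ) (hτ : 1 ≤ τ) (hS : 1 ≤ S) (hT : T = S * τ)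
    (η : ℝ) (hη : η = 1 / Real.sqrt T)
    (f : Fin n → EuclideanSpace ℝ (Fin d) → EuclideanSpace ℝ (Fin p))
    (g : Fin n → EuclideanSpace ℝ (Fin p) → ℝ)
    (hfdiff : ∀ i, Differentiable ℝ (f i))
    (hfb : ∀ i w, ‖fderiv ℝ (f i) w‖ ≤ Gf)
    (hfl : ∀ i w₁ w₂, ‖fderiv ℝ (f i) w₁ - fderiv ℝ (f i) w₂‖ ≤ Lf * ‖w₁ - w₂‖)
    (hgdiff : ∀ i, Differentiable ℝ (g i))
    (hgb : ∀ i y, ‖gradient (g i) y‖ ≤ Gg)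
    (hgl : ∀ i y₁ y₂, ‖gradient (g i) y₁ - gradient (g i) y₂‖ ≤ Lg * ‖y₁ - y₂‖)
    (F : EuclideanSpace ℝ (Fin d) → ℝ)
    (hF : ∀ x, F x = (n : ℝ)⁻¹ * ∑ i, g i (f i x))
    (hFl : ∀ w₁ w₂, ‖gradient F w₁ - gradient F w₂‖ ≤ L * ‖w₁ - w₂‖)
    (hFlb : ∀ x, Fstar ≤ F x)
    (wbar : ℕ → EuclideanSpace ℝ (Fin d))
    (w : Fin n → ℕ → ℕ → EuclideanSpace ℝ (Fin d))
    (hw0 : ∀ i s, w i s 0 = wbar s)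
    (hstep : ∀ i s t, t < τ →
      w i s (t + 1) = w i s t - η • gradient (g i ∘ f i) (w i s t))
    (havg : ∀ s, wbar (s + 1) = (n : ℝ)⁻¹ • ∑ i, w i s τ) :
    (S : ℝ)⁻¹ * ∑ s ∈ Finset.range S, ‖gradient F (wbar s)‖ ^ 2 ≤
      ((F (wbar 0) - Fstar)
        + τ * Gf ^ 2 * Gg ^ 2 * (Gg * Lf + Gf ^ 2 * Lg)
        + L * τ * Gf ^ 2 * Gg ^ 2
        + (L / 2) * Gf ^ 2 * Gg ^ 2) / Real.sqrt T := by
  have hτ0 : (0 : ℝ) < τ := by exact_mod_cast hτ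
  have hS0 : (0 : ℝ) < S := by exact_mod_cast hS
  have hTr : (T : ℝ) = S * τ := by rw [hT]; push_cast; rfl
  have hT0 : (0 : ℝ) < T := by rw [hTr]; positivity
  set r := Real.sqrt T with hr
  have hr0 : 0 < r := Real.sqrt_pos.2 hT0
  have hr2 : r ^ 2 = S * τ := by rw [hr, Real.sq_sqrt hT0.le, hTr]
  have hη0 : 0 < η := by rw [hη]; positivity
  have hηr : η * r = 1 := by rw [hη]; field_simp
  set C := (Gf * Gg) ^ 2 * ((Gg * Lf + Gf ^ 2 * Lg) + L / 2) with hC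
  have hround : ∀ s, η * τ * ‖gradient F (wbar s)‖ ^ 2
      ≤ F (wbar s) - F (wbar (s + 1)) + η ^ 2 * τ ^ 2 * C := by
    intro s
    have := one_round (K := Gg * Lf + Gf ^ 2 * Lg) hn (by positivity) hL.le hη0.le
      (h := fun i => g i ∘ f i) (fun i => (hgdiff i).comp (hfdiff i))
      (fun i x => norm_gradient_comp_le hGg.le (hfdiff i) (hgdiff i) (hfb i) (hgb i) x)
      (fun i x y => gradient_comp_lipschitz hGf.le hGg.le hLg.le (hfdiff i) (hgdiff i)
        (hfb i) (hgb i) (hfl i) (hgl i) x y)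
      hF hFl (fun i => hw0 i s) (fun i => hstep i s) (havg s)
    rw [hC]
    linarith
  have hsum : η * τ * ∑ s ∈ Finset.range S, ‖gradient F (wbar s)‖ ^ 2
      ≤ F (wbar 0) - Fstar + S * (η ^ 2 * τ ^ 2 * C) := by
    rw [Finset.mul_sum]
    refine (Finset.sum_le_sum fun s _ => hround s).trans ?_
    rw [Finset.sum_add_distrib, Finset.sum_range_sub' (fun s => F (wbar s))]
    simp only [Finset.sum_const, Finset.card_range, nsmul_eq_mul]
    linarith [hFlb (wbar S)]
  -- `S η² τ² = τ` because `η² = 1 / (S τ)`.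
  have hη2 : S * (η ^ 2 * τ ^ 2 * C) = τ * C := by
    have : η ^ 2 * (S * τ) = 1 := by rw [← hr2, ← mul_pow, hηr, one_pow]
    linear_combination τ * C * this
  -- `S⁻¹ = η τ / r` because `S η τ = √T`.
  have hinv : (S : ℝ)⁻¹ = η * τ / r := by
    rw [hη]; field_simp; linarith
  rw [hinv, div_mul_eq_mul_div]
  gcongr
  rw [hη2] at hsum
  have hLτ : 0 ≤ L * τ * Gf ^ 2 * Gg ^ 2 := by positivity
  have hL1 : 0 ≤ (L / 2) * Gf ^ 2 * Gg ^ 2 := by positivity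
  have hCe : τ * C = τ * Gf ^ 2 * Gg ^ 2 * (Gg * Lf + Gf ^ 2 * Lg)
      + L * τ * Gf ^ 2 * Gg ^ 2 / 2 := by rw [hC]; ring
  linarith
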